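/- Let k be a field of characteristic 2 and let A = k[x,y]/(x^2, y^2). Then for every natural number n, the n-th Hochschild homology HH_n(A, A) is a k-vector space of dimension 4(n+1). -/

import Mathlib

open TensorProduct MulOpposite CategoryTheory

section Machinery

variable (k : Type) [CommRing k] (S : Type) [Ring S] [Algebra k S] (P : Set (S × S))

/-- The `k`-submodule of (the restriction of scalars of) an `S`-module `N` generated by all
differences `p.1 • n - p.2 • n` for pairs `p ∈ P` and `n ∈ N`. -/
noncomputable def relSub (N : ModuleCat S) :
    Submodule k ((ModuleCat.restrictScalars (algebraMap k S)).obj N) :=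
  Submodule.span k {x | ∃ p ∈ P, ∃ n : N, x = p.1 • n - p.2 • n}

/-- The "coinvariants"-type additive functor sending an `S`-module `N` to its quotient,
as a `k`-module, by the span of all elements `p.1 • n - p.2 • n` for `p ∈ P`, `n ∈ N`. -/
noncomputable def coinvFunctor : ModuleCat S ⥤ ModuleCat k where
  obj N := ModuleCat.of k (((ModuleCat.restrictScalars (algebraMap k S)).obj N) ⧸ relSub k S P N)
  map {N N'} f := ModuleCat.ofHom <| Submodule.mapQ (relSub k S P N) (relSub k S P N')
      ((ModuleCat.restrictScalars (algebraMap k S)).map f).hom (by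
    rw [relSub, Submodule.span_le]
    rintro x ⟨p, hp, n, rfl⟩
    have : ((ModuleCat.restrictScalars (algebraMap k S)).map f) (p.1 • n - p.2 • n)
        = p.1 • (f n) - p.2 • (f n) := by
      show f (p.1 • n - p.2 • n) = _
      rw [map_sub, f.hom.map_smul, f.hom.map_smul]
    refine Submodule.mem_comap.mpr ?_
    exact Submodule.subset_span ⟨p, hp, f n, this⟩)
  map_id _ := ModuleCat.hom_ext (Submodule.linearMap_qext _ (LinearMap.ext fun _ => rfl))
  map_comp _ _ := ModuleCat.hom_ext (Submodule.linearMap_qext _ (LinearMap.ext fun _ => rfl))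

instance : (coinvFunctor k S P).Additive where
  map_add := ModuleCat.hom_ext (Submodule.linearMap_qext _ (LinearMap.ext fun _ => rfl))

end Machinery

/-- Hochschild homology `HH_n(A, A)` of a `k`-algebra `A`: the `n`-th left derived functor
(that is, `Tor_n` over the enveloping algebra `A ⊗[k] Aᵐᵒᵖ`) of the coinvariants functor
`N ↦ N / span { a•n - n•a }` (which is naturally isomorphic to `A ⊗_{A ⊗[k] Aᵐᵒᵖ} -`),
evaluated at the `A`-bimodule `A` itself. -/
noncomputable def HochschildHomology (k : Type) [CommRing k] (A : Type) [Ring A] [Algebra k A]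
    (n : ℕ) : ModuleCat k :=
  letI : Module (A ⊗[k] Aᵐᵒᵖ) A := TensorProduct.Algebra.module
  ((coinvFunctor k (A ⊗[k] Aᵐᵒᵖ)
      {p | ∃ a : A, p = (a ⊗ₜ[k] (1 : Aᵐᵒᵖ), (1 : A) ⊗ₜ[k] op a)}).leftDerived n).obj
    (ModuleCat.of (A ⊗[k] Aᵐᵒᵖ) A)


section Res
variable {S : Type} [CommRing S]

def resD (u v : S) (n : ℕ) : (Fin (n + 1 + 1) → S) →ₗ[S] (Fin (n + 1) → S) where
  toFun f j := u * f j.succ + v * f j.castSucc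
  map_add' f g := by ext j; simp; ring
  map_smul' c f := by ext j; simp; ring

lemma resD_apply (u v : S) (n : ℕ) (f) (j) :
    resD u v n f j = u * f j.succ + v * f j.castSucc := rfl

structure KosData (u v : S) {Z : Type} [AddCommGroup Z] [Module S Z] (ε : S →ₗ[S] Z) : Prop where
  two : (2 : S) = 0
  uu : u * u = 0
  vv : v * v = 0
  annu : ∀ f, u * f = 0 → ∃ g, f = u * g
  annv : ∀ f g, u * g + v * f = 0 → ∃ a b, f = u * a + v * b
  surj : Function.Surjective ε
  eu : ε u = 0
  ev : ε v = 0
  ker : ∀ s, ε s = 0 → ∃ a b, s = u * a + v * b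

variable {u v : S} {Z : Type} [AddCommGroup Z] [Module S Z] {ε : S →ₗ[S] Z}

lemma resD_sq (h : KosData u v ε) (n : ℕ) (f) : resD u v n (resD u v (n + 1) f) = 0 := by
  ext j
  simp only [resD_apply, Pi.zero_apply, Fin.succ_castSucc]
  linear_combination (f j.succ.succ) * h.uu + f (j.castSucc.castSucc) * h.vv +
    u * v * f j.succ.castSucc * h.two

lemma resD_exact (h : KosData u v ε) (n : ℕ) (f) (hf : resD u v n f = 0) :
    ∃ g, resD u v (n + 1) g = f := by
  have hf' : ∀ j : Fin (n + 1), u * f j.succ + v * f j.castSucc = 0 := fun j => congrFun hf j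
  -- partial solutions
  have key : ∀ m : ℕ, m < n + 2 → ∃ g : ℕ → S, ∀ j : Fin (n + 2), j.1 ≤ m →
      f j = u * g (j.1 + 1) + v * g j.1 := by
    intro m
    induction m with
    | zero =>
      intro _
      obtain ⟨a, b, hab⟩ := h.annv _ _ (hf' 0)
      refine ⟨fun i => if i = 0 then b else a, fun j hj => ?_⟩
      have : j = 0 := Fin.ext (by simpa using hj)
      subst this
      simpa using hab
    | succ m ih =>
      intro hm
      obtain ⟨g, hg⟩ := ih (by omega)
      have h1 := hf' ⟨m, by omega⟩
      have h2 := hg ⟨m, by omega⟩ le_rfl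
      have h3 : u * (f ⟨m + 1, hm⟩ - v * g (m + 1)) = 0 := by
        simp only [Fin.succ_mk, Fin.castSucc_mk] at h1
        rw [h2] at h1
        linear_combination h1 - u * v * g (m + 1) * h.two - g m * h.vv
      obtain ⟨c, hc⟩ := h.annu _ h3
      refine ⟨fun i => if i = m + 2 then c else g i, fun j hj => ?_⟩
      rcases Nat.lt_or_ge j.1 (m + 1) with hlt | hge
      · have := hg j (by omega)
        have e1 : ¬ (j.1 + 1 = m + 2) := by omega
        have e2 : ¬ (j.1 = m + 2) := by omega
        simp only [if_neg e1, if_neg e2, this]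
      · have hj' : j = ⟨m + 1, hm⟩ := Fin.ext (by simp; omega)
        subst hj'
        simp only [if_true]
        rw [if_neg (by omega)]
        linear_combination hc
  obtain ⟨g, hg⟩ := key (n + 1) (by omega)
  refine ⟨fun i => g i.1, ?_⟩
  ext j
  rw [hg j (by omega), resD_apply]
  simp

noncomputable def resC (h : KosData u v ε) : ChainComplex (ModuleCat.{0} S) ℕ :=
  ChainComplex.of (fun n => ModuleCat.of S (Fin (n + 1) → S))
    (fun n => ModuleCat.ofHom (resD u v n))
    (fun n => by ext1; exact LinearMap.ext fun f => resD_sq h n f)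

lemma resC_d (h : KosData u v ε) (n : ℕ) :
    (resC h).d (n + 1) n = ModuleCat.ofHom (resD u v n) := 
  ChainComplex.of_d (fun n => ModuleCat.of S (Fin (n + 1) → S))
    (fun n => ModuleCat.ofHom (resD u v n)) n

noncomputable def resE (_ : KosData u v ε) : (Fin (0 + 1) → S) →ₗ[S] Z :=
  ε ∘ₗ LinearMap.proj 0

lemma resE_aux (h : KosData u v ε) (f : Fin (0 + 1 + 1) → S) : ε (resD u v 0 f 0) = 0 := by
  rw [resD_apply, map_add, mul_comm, mul_comm v, ← smul_eq_mul, ← smul_eq_mul, map_smul, map_smul,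
    h.eu, h.ev]
  simp

lemma resE_zero (h : KosData u v ε) :
   (resC h).d 1 0 ≫ (ModuleCat.ofHom (resE h) : (resC h).X 0 ⟶ ModuleCat.of S Z) = 0 := by
  rw [show (resC h).d 1 0 = _ from resC_d h 0]
  ext1
  refine LinearMap.ext fun f => ?_
  exact resE_aux h f

noncomputable def res (h : KosData u v ε) : ProjectiveResolution (ModuleCat.of S Z) where
  complex := resC h
  projective n := by
    show Projective (ModuleCat.of S (Fin (n + 1) → S))
    infer_instance
  π := (ChainComplex.toSingle₀Equiv _ _).symm ⟨ModuleCat.ofHom (resE h), resE_zero h⟩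
  quasiIso := ⟨fun n => by
    cases n
    · rw [ChainComplex.quasiIsoAt₀_iff, ShortComplex.quasiIso_iff_of_zeros']
      · refine (ShortComplex.exact_and_epi_g_iff_of_iso (S₂ := ShortComplex.mk _ _ (resE_zero h)) ?_).2 ⟨?_, ?_⟩
        · exact ShortComplex.isoMk (Iso.refl _) (Iso.refl _) (Iso.refl _)
            ((Category.id_comp _).trans (Category.comp_id _).symm)
            ((Category.id_comp _).trans (Eq.trans
              (ChainComplex.toSingle₀Equiv_symm_apply_f_zero (C := resC h) (X := ModuleCat.of S Z)
                (ModuleCat.ofHom (resE h)) (resE_zero h)).symm (Category.comp_id _).symm))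
        · rw [ShortComplex.moduleCat_exact_iff]
          intro x hx
          obtain ⟨a, b, hab⟩ := h.ker (x 0) hx
          refine ⟨(fun i => if i = 0 then b else a : Fin 2 → S), ?_⟩
          show ((resC h).d 1 0).hom _ = _
          rw [show (resC h).d 1 0 = _ from resC_d h 0]
          refine funext fun j => ?_
          obtain rfl : j = 0 := Fin.ext (by have := j.2; omega)
          refine Eq.trans ?_ hab.symm
          rfl
        · rw [ModuleCat.epi_iff_surjective]
          intro z
          obtain ⟨s, hs⟩ := h.surj z
          exact ⟨fun _ => s, hs⟩
      all_goals rfl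
    · rename_i n
      rw [quasiIsoAt_iff_exactAt']
      · rw [HomologicalComplex.exactAt_iff' _ (n + 1 + 1) (n + 1) n (by simp) (by simp),
          ShortComplex.moduleCat_exact_iff]
        intro x hx
        have hx' : ((resC h).d (n + 1) n).hom x = 0 := hx
        rw [resC_d] at hx'
        obtain ⟨g, hg⟩ := resD_exact h n x hx'
        refine ⟨g, ?_⟩
        show ((resC h).d (n + 1 + 1) (n + 1)).hom g = x
        rw [resC_d]
        exact hg
      · apply ChainComplex.exactAt_succ_single_obj⟩

lemma derived_iso (h : KosData u v ε) {k : Type} [Field k] (F : ModuleCat.{0} S ⥤ ModuleCat.{0} k)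
    [F.Additive]
    (hF : ∀ n, F.map (ModuleCat.ofHom (resD u v n)) = 0) (n : ℕ) :
    Nonempty ((F.leftDerived n).obj (ModuleCat.of S Z) ≅ F.obj (ModuleCat.of S (Fin (n + 1) → S))) := by
  refine ⟨(res h).isoLeftDerivedObj F n ≪≫ ?_⟩
  have hd : ∀ i j, F.map ((resC h).d i j) = 0 := by
    intro i j
    by_cases hij : i = j + 1
    · subst hij
      rw [resC_d]; exact hF j
    · rw [(resC h).shape i j (by simpa using fun e => hij e.symm), F.map_zero]
  exact (ShortComplex.LeftHomologyData.ofZeros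
    (((F.mapHomologicalComplex _).obj (res h).complex).sc n) (hd _ _) (hd _ _)).homologyIso
end Res
section HH
structure TData (k : Type) [Field k] (A : Type) [CommRing A] [Algebra k A] where
  x : Fin 2 → A
  D : Fin 2 → A →ₗ[k] A
  sq : ∀ i, x i * x i = 0
  same : ∀ i a, D i (x i * a) = a + x i * D i a
  diff : ∀ i j, i ≠ j → ∀ a, D i (x j * a) = x j * D i a
  gen : ∀ (B : Type) [CommRing B] [Algebra k B] (f g : A →ₐ[k] B), (∀ i, f (x i) = g (x i)) → f = g

variable {k : Type} [Field k] {A : Type} [CommRing A] [Algebra k A] (T : TData k A)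

noncomputable def tu (i : Fin 2) : A ⊗[k] Aᵐᵒᵖ :=
  T.x i ⊗ₜ[k] (1 : Aᵐᵒᵖ) - (1 : A) ⊗ₜ[k] op (T.x i)

lemma tS_two (k : Type) [Field k] (A : Type) [CommRing A] [Algebra k A] [CharP k 2] :
    (2 : A ⊗[k] Aᵐᵒᵖ) = 0 := by
  have := congrArg (algebraMap k (A ⊗[k] Aᵐᵒᵖ)) (CharTwo.two_eq_zero (R := k))
  rwa [map_ofNat, map_zero] at this

lemma tu_sq [CharP k 2] (i : Fin 2) : tu T i * tu T i = 0 := by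
  have h2 := tS_two k A
  unfold tu
  have e1 : T.x i ⊗ₜ[k] (1 : Aᵐᵒᵖ) * T.x i ⊗ₜ[k] (1 : Aᵐᵒᵖ) = 0 := by
    rw [Algebra.TensorProduct.tmul_mul_tmul, T.sq, zero_tmul]
  have e2 : (1 : A) ⊗ₜ[k] op (T.x i) * (1 : A) ⊗ₜ[k] op (T.x i) = 0 := by
    rw [Algebra.TensorProduct.tmul_mul_tmul, ← op_mul, T.sq, op_zero, tmul_zero]
  linear_combination e1 + e2 - (T.x i ⊗ₜ[k] (1 : Aᵐᵒᵖ)) * ((1 : A) ⊗ₜ[k] op (T.x i)) * h2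

noncomputable def tDS (i : Fin 2) : A ⊗[k] Aᵐᵒᵖ →ₗ[k] A ⊗[k] Aᵐᵒᵖ := (T.D i).rTensor _

lemma tDS_same (i : Fin 2) (s : A ⊗[k] Aᵐᵒᵖ) :
    tDS T i (tu T i * s) = s + tu T i * tDS T i s := by
  induction s using TensorProduct.induction_on with
  | zero => simp
  | add s t hs ht => rw [mul_add, map_add, hs, ht, map_add]; ring
  | tmul a b =>
    simp only [tu, sub_mul, Algebra.TensorProduct.tmul_mul_tmul, one_mul, map_sub, tDS,
      LinearMap.rTensor_tmul, T.same, add_tmul]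
    abel

lemma tDS_diff (i j : Fin 2) (hij : i ≠ j) (s : A ⊗[k] Aᵐᵒᵖ) :
    tDS T i (tu T j * s) = tu T j * tDS T i s := by
  induction s using TensorProduct.induction_on with
  | zero => simp
  | add s t hs ht => rw [mul_add, map_add, hs, ht, map_add]; ring
  | tmul a b =>
    simp only [tu, sub_mul, Algebra.TensorProduct.tmul_mul_tmul, one_mul, map_sub, tDS,
      LinearMap.rTensor_tmul, T.diff i j hij]

@[reducible] noncomputable def tMod (k : Type) [Field k] (A : Type) [CommRing A] [Algebra k A] :
    Module (A ⊗[k] Aᵐᵒᵖ) A := TensorProduct.Algebra.module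

attribute [local instance] tMod

noncomputable def tε (k : Type) [Field k] (A : Type) [CommRing A] [Algebra k A] :
    (A ⊗[k] Aᵐᵒᵖ) →ₗ[A ⊗[k] Aᵐᵒᵖ] A := LinearMap.toSpanSingleton (A ⊗[k] Aᵐᵒᵖ) A 1

lemma tε_tmul (a b : A) : tε k A (a ⊗ₜ op b) = a * b := by
  show a • (op b • (1 : A)) = _
  simp

noncomputable def tJ : Ideal (A ⊗[k] Aᵐᵒᵖ) := Ideal.span {tu T 0, tu T 1}

lemma tJ_mem (b : A) : (b ⊗ₜ[k] (1 : Aᵐᵒᵖ) - (1 : A) ⊗ₜ[k] op b) ∈ tJ T := by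
  let f : A →ₐ[k] (A ⊗[k] Aᵐᵒᵖ) ⧸ tJ T :=
    (Ideal.Quotient.mkₐ k (tJ T)).comp Algebra.TensorProduct.includeLeft
  let g : A →ₐ[k] (A ⊗[k] Aᵐᵒᵖ) ⧸ tJ T := ((Ideal.Quotient.mkₐ k (tJ T)).comp
    Algebra.TensorProduct.includeRight).comp (AlgEquiv.toOpposite k A).toAlgHom
  have : f = g := by
    refine T.gen ((A ⊗[k] Aᵐᵒᵖ) ⧸ tJ T) f g fun i => ?_
    show Ideal.Quotient.mk (tJ T) (T.x i ⊗ₜ 1) = Ideal.Quotient.mk (tJ T) (1 ⊗ₜ op (T.x i))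
    rw [Ideal.Quotient.eq]
    apply Ideal.subset_span
    fin_cases i
    · left; rfl
    · right; rfl
  have h := DFunLike.congr_fun this b
  exact (Ideal.Quotient.eq (I := tJ T)).1 h

lemma tε_ker_aux (s : A ⊗[k] Aᵐᵒᵖ) : s - (tε k A s) ⊗ₜ 1 ∈ tJ T := by
  induction s using TensorProduct.induction_on with
  | zero => simp
  | add s t hs ht =>
    rw [map_add, add_tmul, add_sub_add_comm]
    exact add_mem hs ht
  | tmul a b =>
    have := (tJ T).mul_mem_left ((-a) ⊗ₜ 1) (tJ_mem T (unop b))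
    convert this using 1
    have e := tε_tmul (k := k) a (unop b)
    rw [op_unop] at e
    rw [e, mul_sub, Algebra.TensorProduct.tmul_mul_tmul, Algebra.TensorProduct.tmul_mul_tmul]
    simp only [neg_mul, neg_tmul, mul_one, one_mul, op_unop]
    abel

lemma tε_ker (s : A ⊗[k] Aᵐᵒᵖ) (hs : tε k A s = 0) : ∃ a b, s = tu T 0 * a + tu T 1 * b := by
  have := tε_ker_aux T s
  rw [hs, zero_tmul, sub_zero, tJ, Ideal.mem_span_pair] at this
  obtain ⟨a, b, h⟩ := this
  exact ⟨a, b, by rw [← h]; ring⟩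

lemma tε_rel (a : A) : tε k A (a ⊗ₜ[k] (1 : Aᵐᵒᵖ) - (1 : A) ⊗ₜ[k] op a) = 0 := by
  rw [map_sub, ← op_one, tε_tmul, tε_tmul]; simp

lemma tε_tu (i) : tε k A (tu T i) = 0 := tε_rel _

lemma tKos [CharP k 2] : KosData (tu T 0) (tu T 1) (tε k A) where
  two := tS_two k A
  uu := tu_sq T 0
  vv := tu_sq T 1
  annu f hf := by
    have := tDS_same T 0 f
    rw [hf, map_zero] at this
    exact ⟨-(tDS T 0 f), by linear_combination -this⟩
  annv f g h := by
    have h1 := tDS_same T 1 f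
    have h2 := tDS_diff T 1 0 (by decide) g
    have h3 := congrArg (tDS T 1) h
    rw [map_add, h1, h2, map_zero] at h3
    exact ⟨-(tDS T 1 g), -(tDS T 1 f), by linear_combination h3⟩
  surj a := ⟨a ⊗ₜ op 1, by rw [tε_tmul, mul_one]⟩
  eu := tε_tu T 0
  ev := tε_tu T 1
  ker := tε_ker T

abbrev tP (k : Type) [Field k] (A : Type) [CommRing A] [Algebra k A] :
    Set ((A ⊗[k] Aᵐᵒᵖ) × (A ⊗[k] Aᵐᵒᵖ)) :=
  {p | ∃ a : A, p = (a ⊗ₜ[k] (1 : Aᵐᵒᵖ), (1 : A) ⊗ₜ[k] op a)}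

lemma mem_rel (N : ModuleCat (A ⊗[k] Aᵐᵒᵖ)) (i : Fin 2) (n : N) :
    tu T i • n ∈ relSub k (A ⊗[k] Aᵐᵒᵖ) (tP k A) N :=
  Submodule.subset_span ⟨_, ⟨T.x i, rfl⟩, n, by rw [tu, sub_smul]⟩

lemma coinv_resD (n : ℕ) : (coinvFunctor k (A ⊗[k] Aᵐᵒᵖ) (tP k A)).map
    (ModuleCat.ofHom (resD (tu T 0) (tu T 1) n)) = 0 := by
  refine ModuleCat.hom_ext (Submodule.linearMap_qext _ (LinearMap.ext fun f => ?_))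
  refine (Submodule.Quotient.mk_eq_zero _).2 ?_
  exact add_mem (mem_rel T (ModuleCat.of _ (Fin (n + 1) → A ⊗[k] Aᵐᵒᵖ)) 0 (fun j => f j.succ))
    (mem_rel T (ModuleCat.of _ (Fin (n + 1) → A ⊗[k] Aᵐᵒᵖ)) 1 (fun j => f j.castSucc))

noncomputable def tpr (k : Type) [Field k] (A : Type) [CommRing A] [Algebra k A] (n : ℕ) :
    ((ModuleCat.restrictScalars (algebraMap k (A ⊗[k] Aᵐᵒᵖ))).obj
      (ModuleCat.of (A ⊗[k] Aᵐᵒᵖ) (Fin n → A ⊗[k] Aᵐᵒᵖ))) →ₗ[k] (Fin n → A) where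
  toFun f j := tε k A ((f : Fin n → A ⊗[k] Aᵐᵒᵖ) j)
  map_add' f g := funext fun j => map_add (tε k A) _ _
  map_smul' c f := funext fun j => by
    show tε k A (algebraMap k (A ⊗[k] Aᵐᵒᵖ) c • ((f : Fin n → A ⊗[k] Aᵐᵒᵖ) j)) = _
    rw [map_smul, Algebra.TensorProduct.algebraMap_apply]
    show algebraMap k A c • ((1 : Aᵐᵒᵖ) • (tε k A ((f : Fin n → A ⊗[k] Aᵐᵒᵖ) j))) =
      c • (tε k A ((f : Fin n → A ⊗[k] Aᵐᵒᵖ) j))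
    rw [one_smul, algebraMap_smul]

lemma tpr_ker (T : TData k A) (n : ℕ) : LinearMap.ker (tpr k A n) = relSub k (A ⊗[k] Aᵐᵒᵖ) (tP k A)
    (ModuleCat.of (A ⊗[k] Aᵐᵒᵖ) (Fin n → A ⊗[k] Aᵐᵒᵖ)) := by
  apply le_antisymm
  · intro f hf
    have hf' : ∀ j, tε k A ((f : Fin n → A ⊗[k] Aᵐᵒᵖ) j) = 0 := fun j => congrFun hf j
    choose a b hab using fun j => tε_ker T _ (hf' j)
    have : f = tu T 0 • a + tu T 1 • b := funext hab
    rw [this]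
    exact add_mem (mem_rel T (ModuleCat.of _ (Fin n → A ⊗[k] Aᵐᵒᵖ)) 0 a)
      (mem_rel T (ModuleCat.of _ (Fin n → A ⊗[k] Aᵐᵒᵖ)) 1 b)
  · rw [relSub, Submodule.span_le]
    rintro _ ⟨_, ⟨a, rfl⟩, f, rfl⟩
    refine funext fun j => ?_
    show tε k A (a ⊗ₜ[k] (1 : Aᵐᵒᵖ) * ((f : Fin n → A ⊗[k] Aᵐᵒᵖ) j) -
      (1 : A) ⊗ₜ[k] op a * ((f : Fin n → A ⊗[k] Aᵐᵒᵖ) j)) = 0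
    rw [← sub_mul, mul_comm, ← smul_eq_mul, map_smul, tε_rel, smul_zero]

lemma tpr_surj (n : ℕ) : Function.Surjective (tpr k A n) := fun f =>
  ⟨(fun j => f j ⊗ₜ op 1 : Fin n → A ⊗[k] Aᵐᵒᵖ), funext fun j =>
    (tε_tmul (k := k) (f j) 1).trans (mul_one _)⟩

theorem finrank_HH (T : TData k A) [Module.Finite k A] [CharP k 2] (n : ℕ) :
    Module.finrank k (HochschildHomology k A n) = (n + 1) * Module.finrank k A := by
  obtain ⟨e⟩ := derived_iso (tKos T) (coinvFunctor k (A ⊗[k] Aᵐᵒᵖ) (tP k A)) (coinv_resD T) n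
  have e2 := LinearMap.quotKerEquivOfSurjective _ (tpr_surj (k := k) (A := A) (n + 1))
  rw [tpr_ker T] at e2
  have h1 := e.toLinearEquiv.finrank_eq
  refine h1.trans (e2.finrank_eq.trans ?_)
  rw [Module.finrank_pi_fintype]
  simp
end HH
section TP
variable (k : Type) [Field k]

noncomputable abbrev TI : Ideal (MvPolynomial (Fin 2) k) :=
  Ideal.span {(MvPolynomial.X 0 : MvPolynomial (Fin 2) k) ^ 2,
            (MvPolynomial.X 1 : MvPolynomial (Fin 2) k) ^ 2}

noncomputable abbrev TA : Type := MvPolynomial (Fin 2) k ⧸ TI k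

noncomputable def tx (i : Fin 2) : TA k := Ideal.Quotient.mk (TI k) (MvPolynomial.X i)

lemma tx_sq (i : Fin 2) : tx k i * tx k i = 0 := by
  unfold tx
  rw [← map_mul, ← pow_two, Ideal.Quotient.eq_zero_iff_mem]
  apply Ideal.subset_span
  fin_cases i <;> simp

noncomputable def tE (i j : Fin 2) : Fin 2 →₀ ℕ := Finsupp.single 0 i.1 + Finsupp.single 1 j.1

lemma tE_app0 (i j : Fin 2) : tE i j 0 = i.1 := by simp [tE]
lemma tE_app1 (i j : Fin 2) : tE i j 1 = j.1 := by simp [tE]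

noncomputable def tcoef : MvPolynomial (Fin 2) k →ₗ[k] (Fin 2 × Fin 2 → k) :=
  LinearMap.pi fun p => MvPolynomial.lcoeff k (tE p.1 p.2)

lemma mem_TI (p : MvPolynomial (Fin 2) k) :
    p ∈ TI k ↔ ∀ m ∈ p.support, 2 ≤ m 0 ∨ 2 ≤ m 1 := by
  have : TI k = Ideal.span ((fun s => MvPolynomial.monomial s (1 : k)) ''
      {Finsupp.single 0 2, Finsupp.single 1 2}) := by
    simp [TI, Set.image_insert_eq, MvPolynomial.X_pow_eq_monomial]
  rw [this, MvPolynomial.mem_ideal_span_monomial_image]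
  simp

lemma tcoef_ker : LinearMap.ker (tcoef k) = (TI k).restrictScalars k := by
  ext p
  rw [LinearMap.mem_ker, Submodule.restrictScalars_mem, mem_TI]
  constructor
  · intro h m hm
    by_contra! hc
    have := congrFun h (⟨m 0, hc.1⟩, ⟨m 1, hc.2⟩)
    have e : tE ⟨m 0, hc.1⟩ ⟨m 1, hc.2⟩ = m := by
      ext i; fin_cases i
      · exact tE_app0 _ _
      · exact tE_app1 _ _
    have h2 : MvPolynomial.coeff (tE ⟨m 0, hc.1⟩ ⟨m 1, hc.2⟩) p = 0 := this
    rw [e] at h2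
    exact (MvPolynomial.mem_support_iff.1 hm) h2
  · intro h
    ext ⟨i, j⟩
    show MvPolynomial.coeff (tE i j) p = 0
    by_contra hc
    have := h _ (MvPolynomial.mem_support_iff.2 hc)
    rw [tE_app0, tE_app1] at this
    omega

lemma tcoef_surj : Function.Surjective (tcoef k) := by
  intro c
  refine ⟨∑ p, MvPolynomial.monomial (tE p.1 p.2) (c p), ?_⟩
  rw [map_sum]
  ext q
  rw [Finset.sum_apply, Finset.sum_eq_single q]
  · show MvPolynomial.coeff (tE q.1 q.2) (MvPolynomial.monomial (tE q.1 q.2) (c q)) = _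
    simp
  · intro b _ hb
    show MvPolynomial.coeff (tE q.1 q.2) (MvPolynomial.monomial (tE b.1 b.2) (c b)) = _
    rw [MvPolynomial.coeff_monomial, if_neg]
    intro e
    apply hb
    have h0 := DFunLike.congr_fun e 0
    have h1 := DFunLike.congr_fun e 1
    rw [tE_app0, tE_app0] at h0
    rw [tE_app1, tE_app1] at h1
    exact Prod.ext (Fin.ext h0) (Fin.ext h1)
  · simp

lemma finrank_TA : Module.finrank k (TA k) = 4 := by
  have e2 := LinearMap.quotKerEquivOfSurjective _ (tcoef_surj k)
  rw [tcoef_ker] at e2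
  have e1 : ((MvPolynomial (Fin 2) k) ⧸ (TI k).restrictScalars k) ≃ₗ[k] TA k :=
    Submodule.Quotient.restrictScalarsEquiv k (TI k)
  rw [← e1.finrank_eq, e2.finrank_eq]
  simp

lemma finite_TA : Module.Finite k (TA k) := by
  apply Module.finite_of_finrank_pos
  rw [finrank_TA]; norm_num

section der
variable [CharP k 2]

noncomputable def tD (i : Fin 2) : TA k →ₗ[k] TA k :=
  Submodule.mapQ ((TI k).restrictScalars k) ((TI k).restrictScalars k)
    (MvPolynomial.pderiv i).toLinearMap (by
      intro p hp
      rw [Submodule.restrictScalars_mem, Ideal.mem_span_pair] at hp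
      obtain ⟨a, b, rfl⟩ := hp
      have h2 : (2 : MvPolynomial (Fin 2) k) = 0 := CharTwo.two_eq_zero
      rw [Submodule.mem_comap, Submodule.restrictScalars_mem]
      rw [Ideal.mem_span_pair]
      refine ⟨MvPolynomial.pderiv i a, MvPolynomial.pderiv i b, ?_⟩
      simp only [Derivation.coeFn_coe, map_add, Derivation.leibniz, 
        Derivation.leibniz_pow, smul_eq_mul, nsmul_eq_mul]
      push_cast
      rw [h2]
      ring)

lemma tD_mk (i : Fin 2) (p : MvPolynomial (Fin 2) k) :
    tD k i (Ideal.Quotient.mk (TI k) p) = Ideal.Quotient.mk (TI k) (MvPolynomial.pderiv i p) := rfl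

lemma tD_same (i : Fin 2) (a : TA k) : tD k i (tx k i * a) = a + tx k i * tD k i a := by
  obtain ⟨p, rfl⟩ := Ideal.Quotient.mk_surjective a
  unfold tx
  rw [← map_mul, tD_mk, tD_mk, ← map_mul, ← map_add]
  congr 1
  simp [add_comm]

lemma tD_diff (i j : Fin 2) (hij : i ≠ j) (a : TA k) : tD k i (tx k j * a) = tx k j * tD k i a := by
  obtain ⟨p, rfl⟩ := Ideal.Quotient.mk_surjective a
  unfold tx
  rw [← map_mul, tD_mk, tD_mk, ← map_mul]
  congr 1
  simp [MvPolynomial.pderiv_X_of_ne hij.symm]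

end der

end TP

noncomputable def tData (k : Type) [Field k] [CharP k 2] : TData k (TA k) where
  x := tx k
  D := tD k
  sq := tx_sq k
  same := tD_same k
  diff := tD_diff k
  gen B _ _ f g h := by
    apply Ideal.Quotient.algHom_ext
    apply MvPolynomial.algHom_ext
    exact h

/-- For a field `k` of characteristic 2 and `A = k[x,y]/(x², y²)`, the Hochschild homology
`HH_n(A, A)` is a `k`-vector space of dimension `4(n+1)` for every `n`. -/
theorem hochschildHomology_truncPoly (k : Type) [Field k] [CharP k 2] (n : ℕ) :
    Module.finrank k
      (HochschildHomology k
        (MvPolynomial (Fin 2) k ⧸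
          Ideal.span {(MvPolynomial.X 0 : MvPolynomial (Fin 2) k) ^ 2,
            (MvPolynomial.X 1 : MvPolynomial (Fin 2) k) ^ 2}) n)
      = 4 * (n + 1) := by
  have := finite_TA k
  have := finrank_HH (tData k) n
  rw [finrank_TA] at this
  exact this.trans (mul_comm _ _)
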